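/- Sharp affine L_p log-Sobolev inequality: for n ≥ 1, p > 1, and any smooth compactly supported f on ℝⁿ with ∫ |f|^p dx = 1, one has ∫ |f|^p log |f|^p dx ≤ (n/p) log(𝓛_{n,p} 𝓔_p(f)^p), where 𝓔_p(f) = c_{n,p} (∫_{S^{n-1}} ‖∇_ξ f‖_p^{-n} dξ)^{-1/n}, c_{n,p} = (nω_n)^{1/n} (nω_n ω_{p-1}/(2ω_{n+p-2}))^{1/p}, and 𝓛_{n,p} = (p/n)((p-1)/e)^{p-1} π^{-p/2} (Γ(n/2+1)/Γ(n(p-1)/p+1))^{p/n}. This may assume as hypotheses the Euclidean sharp L_p log-Sobolev inequality for arbitrary q-homogeneous even strictly convex cost functions (Gentil's theorem) and the L_p Busemann-Petty centroid inequality. -/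

import Mathlib

open MeasureTheory Real
open scoped RealInnerProductSpace Pointwise

noncomputable section

/-- `ω_s = π^(s/2) / Γ(s/2 + 1)`. -/
def omegaR (s : ℝ) : ℝ := Real.pi ^ (s / 2) / Real.Gamma (s / 2 + 1)

/-- `a₁ = ω_{n+p} / (ω₂ ω_n ω_{p-1})`. -/
def aOne (n : ℕ) (p : ℝ) : ℝ := omegaR (n + p) / (omegaR 2 * omegaR n * omegaR (p - 1))

/-- The `L^p` norm of the directional derivative `∇_ξ f = ⟨∇f, ξ⟩`. -/
def dirDerivLpNorm (n : ℕ) (p : ℝ) (f : EuclideanSpace ℝ (Fin n) → ℝ)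
    (ξ : EuclideanSpace ℝ (Fin n)) : ℝ :=
  (∫ y, |⟪gradient f y, ξ⟫| ^ p) ^ (1 / p)

/-- `C_f*(x) = ∫_{S^{n-1}} ‖∇_ξ f‖_p^{-(n+p)} |⟨x, ξ⟩|^p dξ`. -/
def Cfstar (n : ℕ) (p : ℝ) (f : EuclideanSpace ℝ (Fin n) → ℝ)
    (x : EuclideanSpace ℝ (Fin n)) : ℝ :=
  ∫ ξ : Metric.sphere (0 : EuclideanSpace ℝ (Fin n)) 1,
    dirDerivLpNorm n p f ξ ^ (-(n + p : ℝ)) * |⟪x, (ξ : EuclideanSpace ℝ (Fin n))⟫| ^ p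
      ∂(volume : Measure (EuclideanSpace ℝ (Fin n))).toSphere

/-- The Legendre transform. -/
def legendre {n : ℕ} (C : EuclideanSpace ℝ (Fin n) → ℝ) (x : EuclideanSpace ℝ (Fin n)) : ℝ :=
  ⨆ y : EuclideanSpace ℝ (Fin n), (⟪x, y⟫ - C y)

/-- The `L_p`-centroid body `Γ_p L`, described through its support function
`h_{Γ_p L}(v) = ((1/(a₁ vol(L))) ∫_L |⟨v, x⟩|^p dx)^{1/p}`. -/
def centroidBody (n : ℕ) (p : ℝ) (L : Set (EuclideanSpace ℝ (Fin n))) :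
    Set (EuclideanSpace ℝ (Fin n)) :=
  {x | ∀ v : EuclideanSpace ℝ (Fin n),
    ⟪x, v⟫ ≤ ((aOne n p * (volume L).toReal)⁻¹ * ∫ y in L, |⟪v, y⟫| ^ p) ^ (1 / p)}


/-- `Z_p(f) = (∫_{S^{n-1}} ‖∇_ξ f‖_p^{-n} dξ)^{-1/n}`. -/
def Zp (n : ℕ) (p : ℝ) (f : EuclideanSpace ℝ (Fin n) → ℝ) : ℝ :=
  (∫ ξ : Metric.sphere (0 : EuclideanSpace ℝ (Fin n)) 1,
      dirDerivLpNorm n p f ξ ^ (-(n : ℝ))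
        ∂(volume : Measure (EuclideanSpace ℝ (Fin n))).toSphere) ^ (-(1 / (n : ℝ)))

/-- `c_{n,p} = (n ω_n)^{1/n} (n ω_n ω_{p-1} / (2 ω_{n+p-2}))^{1/p}`. -/
def cnp (n : ℕ) (p : ℝ) : ℝ :=
  ((n : ℝ) * omegaR n) ^ (1 / (n : ℝ)) *
    ((n : ℝ) * omegaR n * omegaR (p - 1) / (2 * omegaR ((n : ℝ) + p - 2))) ^ (1 / p)

/-- The affine energy `𝓔_p(f) = c_{n,p} Z_p(f)`. -/
def affineEnergy (n : ℕ) (p : ℝ) (f : EuclideanSpace ℝ (Fin n) → ℝ) : ℝ :=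
  cnp n p * Zp n p f

/-- The sharp `L_p` log-Sobolev constant
`𝓛_{n,p} = (p/n) ((p-1)/e)^{p-1} π^{-p/2} (Γ(n/2+1)/Γ(n(p-1)/p+1))^{p/n}`. -/
def logSobolevConst (n : ℕ) (p : ℝ) : ℝ :=
  (p / n) * ((p - 1) / Real.exp 1) ^ (p - 1) * Real.pi ^ (-(p / 2)) *
    (Real.Gamma ((n : ℝ) / 2 + 1) / Real.Gamma ((n : ℝ) * (p - 1) / p + 1)) ^ (p / (n : ℝ))


section Polar

open scoped ENNReal

/-- Dilation of a one-dimensional integral against the density `r ^ k`. -/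
theorem lintegral_Ioi_pow_mul_comp_mul_left {a : ℝ} (ha : 0 < a) (k : ℕ) (g : ℝ → ℝ≥0∞) :
    ∫⁻ r in Set.Ioi (0 : ℝ), ENNReal.ofReal (r ^ k) * g (a * r) =
      ENNReal.ofReal (a ^ (-((k : ℝ) + 1))) *
        ∫⁻ r in Set.Ioi (0 : ℝ), ENNReal.ofReal (r ^ k) * g r := by
  have himg : (fun r => a * r) '' Set.Ioi (0 : ℝ) = Set.Ioi 0 := by
    have := Set.image_mul_left_Ioi ha 0
    simpa using this
  have key := lintegral_image_eq_lintegral_abs_deriv_mul (f := fun r => a * r)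
    (f' := fun _ => a) (s := Set.Ioi (0 : ℝ)) measurableSet_Ioi
    (fun x _ => by simpa using ((hasDerivAt_id x).const_mul a).hasDerivWithinAt)
    (fun x _ y _ h => mul_left_cancel₀ ha.ne' h) (fun r => ENNReal.ofReal (r ^ k) * g r)
  rw [himg] at key
  rw [key, ← lintegral_const_mul' _ _ ENNReal.ofReal_ne_top]
  refine setLIntegral_congr_fun measurableSet_Ioi fun r hr => ?_
  have hr : 0 < r := hr
  simp only [← mul_assoc]
  congr 1
  rw [← ENNReal.ofReal_mul (by positivity), ← ENNReal.ofReal_mul (by positivity)]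
  congr 1
  rw [rpow_neg ha.le, abs_of_pos ha, rpow_add_one ha.ne', rpow_natCast, mul_pow]
  field_simp

variable {E : Type*} [NormedAddCommGroup E] [NormedSpace ℝ E] [FiniteDimensional ℝ E]
  [MeasurableSpace E] [BorelSpace E] [Nontrivial E] (μ : Measure E) [μ.IsAddHaarMeasure]

/-- Integration in polar coordinates. -/
theorem lintegral_eq_lintegral_toSphere {F : E → ℝ≥0∞} (hF : Measurable F) :
    ∫⁻ x, F x ∂μ = ∫⁻ ξ : Metric.sphere (0 : E) 1, ∫⁻ r in Set.Ioi (0 : ℝ),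
      ENNReal.ofReal (r ^ (Module.finrank ℝ E - 1)) * F (r • (ξ : E)) ∂volume ∂μ.toSphere := by
  have hmp := (μ.measurePreserving_homeomorphUnitSphereProd)
  calc ∫⁻ x, F x ∂μ = ∫⁻ x : ({(0)}ᶜ : Set E), F x ∂(μ.comap (↑)) := by
        rw [lintegral_subtype_comap (measurableSet_singleton _).compl, restrict_compl_singleton]
    _ = ∫⁻ z : Metric.sphere (0 : E) 1 × Set.Ioi (0 : ℝ), F ((z.2 : ℝ) • (z.1 : E))
          ∂(μ.toSphere.prod (.volumeIoiPow (Module.finrank ℝ E - 1))) := by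
        rw [← hmp.lintegral_comp_emb (Homeomorph.measurableEmbedding _)]
        refine lintegral_congr fun x => ?_
        have hx : (x : E) ≠ 0 := x.2
        simp [smul_smul, hx]
    _ = _ := by
        rw [lintegral_prod _ (by fun_prop)]
        refine lintegral_congr fun ξ => ?_
        rw [Measure.volumeIoiPow, lintegral_withDensity_eq_lintegral_mul _ (by fun_prop)
          (by fun_prop)]
        exact lintegral_subtype_comap measurableSet_Ioi
          (fun r : ℝ => ENNReal.ofReal (r ^ (Module.finrank ℝ E - 1)) * F (r • (ξ : E)))

/-- Integration of a function of a positively homogeneous function. -/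
theorem lintegral_comp_of_homogeneous {φ : E → ℝ} (hφ : Measurable φ)
    (hhom : ∀ r : ℝ, 0 < r → ∀ x, φ (r • x) = r * φ x) (hpos : ∀ x, x ≠ 0 → 0 < φ x)
    {g : ℝ → ℝ≥0∞} (hg : Measurable g) :
    ∫⁻ x, g (φ x) ∂μ =
      (∫⁻ ξ : Metric.sphere (0 : E) 1,
        ENNReal.ofReal (φ ξ ^ (-(Module.finrank ℝ E : ℝ))) ∂μ.toSphere) *
      ∫⁻ r in Set.Ioi (0 : ℝ), ENNReal.ofReal (r ^ (Module.finrank ℝ E - 1)) * g r := by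
  rw [lintegral_eq_lintegral_toSphere μ (F := fun x => g (φ x)) (by fun_prop),
    ← lintegral_mul_const'' _ (by fun_prop)]
  refine lintegral_congr fun ξ => ?_
  have hξ : 0 < φ ξ := hpos _ (ne_zero_of_mem_unit_sphere ξ)
  have hdim : 0 < Module.finrank ℝ E := Module.finrank_pos
  have h := lintegral_Ioi_pow_mul_comp_mul_left hξ (Module.finrank ℝ E - 1) g
  rw [Nat.cast_pred hdim, sub_add_cancel] at h
  rw [← h]
  refine setLIntegral_congr_fun measurableSet_Ioi fun r hr => ?_
  simp only [hhom r hr, mul_comm]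

theorem lintegral_Ioi_pow_mul_indicator_Iic_rpow {k : ℕ} (hk : 0 < k) {s : ℝ} (hs : 0 ≤ s) :
    ∫⁻ r in Set.Ioi (0 : ℝ), ENNReal.ofReal (r ^ (k - 1)) *
      (Set.Iic (1 : ℝ)).indicator (fun r => ENNReal.ofReal (r ^ s)) r =
        ENNReal.ofReal (1 / (k + s)) := by
  have hk' : (0 : ℝ) < k := by exact_mod_cast hk
  have h1 : ∀ r ∈ Set.Ioi (0 : ℝ), ENNReal.ofReal (r ^ (k - 1)) *
      (Set.Iic (1 : ℝ)).indicator (fun r => ENNReal.ofReal (r ^ s)) r =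
      (Set.Iic (1 : ℝ)).indicator (fun r => ENNReal.ofReal (r ^ (k - 1 + s))) r := by
    intro r hr
    have hr : 0 < r := hr
    by_cases h : r ∈ Set.Iic (1 : ℝ)
    · rw [Set.indicator_of_mem h, Set.indicator_of_mem h, ← ENNReal.ofReal_mul (by positivity),
        rpow_add hr, ← rpow_natCast, Nat.cast_pred hk]
    · simp [Set.indicator_of_notMem h]
  rw [setLIntegral_congr_fun measurableSet_Ioi h1, lintegral_indicator measurableSet_Iic,
    Measure.restrict_restrict measurableSet_Iic, Set.inter_comm, Set.Ioi_inter_Iic,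
    ← ofReal_integral_eq_lintegral_ofReal, ← intervalIntegral.integral_of_le zero_le_one,
    integral_rpow (Or.inl (by linarith))]
  · congr 1
    rw [one_rpow, zero_rpow (by linarith)]
    ring
  · exact (intervalIntegral.intervalIntegrable_rpow' (by linarith)).1
  · filter_upwards [ae_restrict_mem measurableSet_Ioc] with r hr
    exact rpow_nonneg hr.1.le _

theorem lintegral_Ioi_pow_mul_exp_neg_rpow {k : ℕ} (hk : 0 < k) {q : ℝ} (hq : 0 < q) :
    ∫⁻ r in Set.Ioi (0 : ℝ), ENNReal.ofReal (r ^ (k - 1)) * ENNReal.ofReal (exp (-r ^ q)) =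
        ENNReal.ofReal (Gamma (k / q + 1) / k) := by
  have hk' : (0 : ℝ) < k := by exact_mod_cast hk
  have h1 : ∀ r ∈ Set.Ioi (0 : ℝ), ENNReal.ofReal (r ^ (k - 1)) * ENNReal.ofReal (exp (-r ^ q)) =
      ENNReal.ofReal (r ^ ((k : ℝ) - 1) * exp (-r ^ q)) := by
    intro r hr
    have hr : 0 < r := hr
    rw [← ENNReal.ofReal_mul (by positivity), ← rpow_natCast, Nat.cast_pred hk]
  rw [setLIntegral_congr_fun measurableSet_Ioi h1, ← ofReal_integral_eq_lintegral_ofReal,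
    integral_rpow_mul_exp_neg_rpow hq (by linarith)]
  · congr 1
    rw [Gamma_add_one (by positivity), sub_add_cancel]
    field_simp
  · by_contra hint
    have := integral_rpow_mul_exp_neg_rpow (p := q) (q := k - 1) hq (by linarith)
    rw [integral_undef hint] at this
    have : 0 < 1 / q * Gamma ((k - 1 + 1) / q) :=
      mul_pos (by positivity) (Gamma_pos_of_pos (by rw [sub_add_cancel]; positivity))
    linarith
  · filter_upwards [ae_restrict_mem measurableSet_Ioi] with r hr
    have hr : 0 < r := hr
    positivity

end Polar


section Homogeneous

theorem rpow_one_div_smul_of_homogeneous {E : Type*} [AddCommGroup E] [Module ℝ E] {F : E → ℝ}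
    {p : ℝ} (hp : 0 < p) (hhom : ∀ l : ℝ, 0 ≤ l → ∀ x, F (l • x) = l ^ p * F x) (h0 : ∀ x, 0 ≤ F x)
    (r : ℝ) (hr : 0 < r) (x : E) : F (r • x) ^ (1 / p) = r * F x ^ (1 / p) := by
  rw [hhom r hr.le, mul_rpow (by positivity) (h0 x), ← rpow_mul hr.le, mul_one_div_cancel hp.ne',
    rpow_one]

theorem nonneg_of_homogeneous_of_pos {E : Type*} [AddCommGroup E] [Module ℝ E] {F : E → ℝ}
    {p : ℝ} (hp : 0 < p)
    (hhom : ∀ l : ℝ, 0 ≤ l → ∀ x, F (l • x) = l ^ p * F x)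
    (hpos : ∀ x, x ≠ 0 → 0 < F x) (x : E) : 0 ≤ F x := by
  rcases eq_or_ne x 0 with rfl | hx
  · have := hhom 0 le_rfl 0
    rw [zero_smul, zero_rpow hp.ne', zero_mul] at this
    exact this.ge
  · exact (hpos x hx).le

variable {E : Type*} [NormedAddCommGroup E] [NormedSpace ℝ E] [FiniteDimensional ℝ E]
  [MeasurableSpace E] [BorelSpace E] (μ : Measure E) [μ.IsAddHaarMeasure]
  {F : E → ℝ} {p : ℝ}

/-- The integral over the unit sphere controlling the sublevel sets of a homogeneous function
is finite. -/
theorem integrable_toSphere_rpow (hF : Continuous F) (hpos : ∀ x, x ≠ 0 → 0 < F x) (s : ℝ) :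
    Integrable (fun ξ : Metric.sphere (0 : E) 1 => F ξ ^ s) μ.toSphere := by
  have hc : Continuous (fun ξ : Metric.sphere (0 : E) 1 => F ξ ^ s) :=
    (hF.comp continuous_subtype_val).rpow_const
      fun ξ => Or.inl (hpos _ (ne_zero_of_mem_unit_sphere ξ)).ne'
  have : CompactSpace (Metric.sphere (0 : E) 1) :=
    isCompact_iff_compactSpace.mp (isCompact_sphere _ _)
  exact hc.integrable_of_hasCompactSupport (HasCompactSupport.of_compactSpace _)

theorem lintegral_toSphere_eq_ofReal (hF : Continuous F) (hpos : ∀ x, x ≠ 0 → 0 < F x) :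
    ∫⁻ ξ : Metric.sphere (0 : E) 1,
        ENNReal.ofReal ((F ξ ^ (1 / p)) ^ (-(Module.finrank ℝ E : ℝ))) ∂μ.toSphere =
      ENNReal.ofReal (∫ ξ : Metric.sphere (0 : E) 1,
        (F ξ ^ (1 / p)) ^ (-(Module.finrank ℝ E : ℝ)) ∂μ.toSphere) := by
  have h0 : ∀ ξ : Metric.sphere (0 : E) 1, 0 < F ξ :=
    fun ξ => hpos _ (ne_zero_of_mem_unit_sphere ξ)
  rw [ofReal_integral_eq_lintegral_ofReal]
  · simp only [← rpow_mul (h0 _).le]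
    exact integrable_toSphere_rpow μ hF hpos _
  · exact .of_forall fun ξ => rpow_nonneg (rpow_nonneg (h0 ξ).le _) _

theorem measure_sublevel_eq_rpow_mul (hp : 0 < p)
    (hhom : ∀ l : ℝ, 0 ≤ l → ∀ x, F (l • x) = l ^ p * F x) {t : ℝ} (ht : 0 < t) :
    (μ {x | F x ≤ 1}).toReal =
      t ^ (-(Module.finrank ℝ E / p : ℝ)) * (μ {x | F x ≤ t}).toReal := by
  have hset : {x | F x ≤ 1} = (fun x => t ^ (1 / p) • x) ⁻¹' {x | F x ≤ t} := by
    ext x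
    simp only [Set.mem_ofPred_eq, Set.mem_preimage]
    rw [hhom _ (by positivity), ← rpow_mul ht.le, one_div_mul_cancel hp.ne', rpow_one]
    exact (mul_le_iff_le_one_right ht).symm
  rw [hset, Measure.addHaar_preimage_smul _ (by positivity), ENNReal.toReal_mul,
    ENNReal.toReal_ofReal (abs_nonneg _), abs_of_pos (by positivity), ← rpow_natCast,
    ← rpow_mul ht.le, ← rpow_neg ht.le, one_div_mul_eq_div]

variable [Nontrivial E]

theorem setLIntegral_sublevel_of_homogeneous (hp : 0 < p) (hF : Continuous F)
    (hhom : ∀ l : ℝ, 0 ≤ l → ∀ x, F (l • x) = l ^ p * F x) (hpos : ∀ x, x ≠ 0 → 0 < F x)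
    {s : ℝ} (hs : 0 ≤ s) :
    ∫⁻ x in {x | F x ≤ 1}, ENNReal.ofReal (F x ^ (s / p)) ∂μ =
      ENNReal.ofReal ((∫ ξ : Metric.sphere (0 : E) 1,
        (F ξ ^ (1 / p)) ^ (-(Module.finrank ℝ E : ℝ)) ∂μ.toSphere) *
          (1 / (Module.finrank ℝ E + s))) := by
  have h0 := nonneg_of_homogeneous_of_pos hp hhom hpos
  rw [ENNReal.ofReal_mul' (by positivity), ← lintegral_toSphere_eq_ofReal μ hF hpos,
    ← lintegral_Ioi_pow_mul_indicator_Iic_rpow Module.finrank_pos hs,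
    ← lintegral_comp_of_homogeneous μ (φ := fun x => F x ^ (1 / p))
      (hF.measurable.pow_const _) (rpow_one_div_smul_of_homogeneous hp hhom h0)
      (fun x hx => rpow_pos_of_pos (hpos x hx) _)
      (Measurable.indicator (by fun_prop) measurableSet_Iic),
    ← lintegral_indicator (measurableSet_le hF.measurable measurable_const)]
  refine lintegral_congr fun x => ?_
  have hiff : F x ^ (1 / p) ≤ 1 ↔ F x ≤ 1 :=
    ⟨fun h => by
      by_contra! h'
      exact (one_lt_rpow h' (by positivity : 0 < 1 / p)).not_ge h,
      fun h => rpow_le_one (h0 x) h (by positivity)⟩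
  simp only [Set.indicator, Set.mem_ofPred_eq, Set.mem_Iic, hiff]
  rw [← rpow_mul (h0 x), one_div_mul_eq_div]

/-- Volume of the unit sublevel set of a homogeneous function. -/
theorem measure_sublevel_of_homogeneous (hp : 0 < p) (hF : Continuous F)
    (hhom : ∀ l : ℝ, 0 ≤ l → ∀ x, F (l • x) = l ^ p * F x) (hpos : ∀ x, x ≠ 0 → 0 < F x) :
    μ {x | F x ≤ 1} =
      ENNReal.ofReal ((∫ ξ : Metric.sphere (0 : E) 1,
        (F ξ ^ (1 / p)) ^ (-(Module.finrank ℝ E : ℝ)) ∂μ.toSphere) / Module.finrank ℝ E) := by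
  have h := setLIntegral_sublevel_of_homogeneous μ hp hF hhom hpos le_rfl
  simpa [div_eq_mul_inv] using h

theorem setIntegral_sublevel_of_homogeneous (hp : 0 < p) (hF : Continuous F)
    (hhom : ∀ l : ℝ, 0 ≤ l → ∀ x, F (l • x) = l ^ p * F x) (hpos : ∀ x, x ≠ 0 → 0 < F x) :
    ∫ x in {x | F x ≤ 1}, F x ∂μ =
      Module.finrank ℝ E / (Module.finrank ℝ E + p) * (μ {x | F x ≤ 1}).toReal := by
  have h0 := nonneg_of_homogeneous_of_pos hp hhom hpos
  have hd : (0 : ℝ) < Module.finrank ℝ E := by exact_mod_cast Module.finrank_pos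
  have hS : 0 ≤ ∫ ξ : Metric.sphere (0 : E) 1,
      (F ξ ^ (1 / p)) ^ (-(Module.finrank ℝ E : ℝ)) ∂μ.toSphere :=
    integral_nonneg fun ξ => rpow_nonneg (rpow_nonneg (h0 ξ) _) _
  have h := setLIntegral_sublevel_of_homogeneous μ hp hF hhom hpos hp.le
  simp only [div_self hp.ne', rpow_one] at h
  rw [integral_eq_lintegral_of_nonneg_ae (.of_forall h0) hF.aestronglyMeasurable, h,
    measure_sublevel_of_homogeneous μ hp hF hhom hpos, ENNReal.toReal_ofReal (by positivity),
    ENNReal.toReal_ofReal (by positivity)]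
  field_simp

theorem integral_exp_neg_of_homogeneous (hp : 0 < p) (hF : Continuous F)
    (hhom : ∀ l : ℝ, 0 ≤ l → ∀ x, F (l • x) = l ^ p * F x) (hpos : ∀ x, x ≠ 0 → 0 < F x) :
    ∫ x, exp (-F x) ∂μ =
      Gamma (Module.finrank ℝ E / p + 1) * (μ {x | F x ≤ 1}).toReal := by
  have h0 := nonneg_of_homogeneous_of_pos hp hhom hpos
  have hd : (0 : ℝ) < Module.finrank ℝ E := by exact_mod_cast Module.finrank_pos
  have hS : 0 ≤ ∫ ξ : Metric.sphere (0 : E) 1,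
      (F ξ ^ (1 / p)) ^ (-(Module.finrank ℝ E : ℝ)) ∂μ.toSphere :=
    integral_nonneg fun ξ => rpow_nonneg (rpow_nonneg (h0 ξ) _) _
  have hG : 0 < Gamma (Module.finrank ℝ E / p + 1) := Gamma_pos_of_pos (by positivity)
  have h := lintegral_comp_of_homogeneous μ (φ := fun x => F x ^ (1 / p))
      (hF.measurable.pow_const _) (rpow_one_div_smul_of_homogeneous hp hhom h0)
      (fun x hx => rpow_pos_of_pos (hpos x hx) _)
      (g := fun r => ENNReal.ofReal (exp (-r ^ p))) (by fun_prop)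
  rw [lintegral_Ioi_pow_mul_exp_neg_rpow Module.finrank_pos hp,
    lintegral_toSphere_eq_ofReal μ hF hpos, ← ENNReal.ofReal_mul hS] at h
  have hroot : ∀ x, (F x ^ (1 / p)) ^ p = F x := fun x => by
    rw [← rpow_mul (h0 x), one_div_mul_cancel hp.ne', rpow_one]
  simp only [hroot] at h
  rw [integral_eq_lintegral_of_nonneg_ae (.of_forall fun x => (exp_pos _).le)
      (by fun_prop), h, measure_sublevel_of_homogeneous μ hp hF hhom hpos,
    ENNReal.toReal_ofReal (by positivity), ENNReal.toReal_ofReal (by positivity)]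
  field_simp

end Homogeneous


section Moment

variable {α E : Type*} [MeasurableSpace α] [NormedAddCommGroup E] [InnerProductSpace ℝ E]
  {μ : Measure α} {a : α → E} {p : ℝ}

theorem abs_inner_rpow_le (hp : 0 ≤ p) (x v : E) : |⟪x, v⟫| ^ p ≤ ‖x‖ ^ p * ‖v‖ ^ p := by
  rw [← mul_rpow (norm_nonneg _) (norm_nonneg _)]
  exact rpow_le_rpow (abs_nonneg _) (abs_real_inner_le_norm x v) hp

theorem integrable_abs_inner_rpow (hp : 0 ≤ p) (ha : AEStronglyMeasurable a μ)
    (hi : Integrable (fun y => ‖a y‖ ^ p) μ) (v : E) :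
    Integrable (fun y => |⟪a y, v⟫| ^ p) μ := by
  refine (hi.mul_const (‖v‖ ^ p)).mono' ?_ (.of_forall fun y => ?_)
  · have h : AEStronglyMeasurable (fun y => ⟪a y, v⟫) μ := ha.inner aestronglyMeasurable_const
    exact ((continuous_abs.rpow_const fun _ => Or.inr hp).comp_aestronglyMeasurable h)
  · rw [norm_of_nonneg (by positivity)]
    exact abs_inner_rpow_le hp _ _

theorem convexOn_abs_rpow (hp : 1 ≤ p) : ConvexOn ℝ Set.univ (fun t : ℝ => |t| ^ p) := by
  refine ⟨convex_univ, fun x _ y _ s t hs ht hst => ?_⟩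
  have h := (convexOn_rpow hp).2 (Set.mem_Ici.2 (abs_nonneg x)) (Set.mem_Ici.2 (abs_nonneg y))
    hs ht hst
  refine le_trans (rpow_le_rpow (abs_nonneg _) ?_ (by linarith)) h
  calc |s • x + t • y| ≤ |s • x| + |t • y| := abs_add_le _ _
    _ = s • |x| + t • |y| := by simp [abs_mul, abs_of_nonneg hs, abs_of_nonneg ht]

theorem convexOn_integral_abs_inner_rpow (hp : 1 ≤ p) (ha : AEStronglyMeasurable a μ)
    (hi : Integrable (fun y => ‖a y‖ ^ p) μ) :
    ConvexOn ℝ Set.univ (fun v => ∫ y, |⟪a y, v⟫| ^ p ∂μ) := by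
  have hI := integrable_abs_inner_rpow (by linarith) ha hi
  refine ⟨convex_univ, fun v _ w _ s t hs ht hst => ?_⟩
  simp only [smul_eq_mul]
  rw [← integral_const_mul, ← integral_const_mul,
    ← integral_add ((hI v).const_mul s) ((hI w).const_mul t)]
  refine integral_mono (hI _) (((hI v).const_mul s).add ((hI w).const_mul t)) fun y => ?_
  have := (convexOn_abs_rpow hp).2 (Set.mem_univ ⟪a y, v⟫) (Set.mem_univ ⟪a y, w⟫) hs ht hst
  simpa [inner_add_right, inner_smul_right] using this

theorem integral_abs_inner_rpow_smul (l : ℝ) (hl : 0 ≤ l) (v : E) :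
    ∫ y, |⟪a y, l • v⟫| ^ p ∂μ = l ^ p * ∫ y, |⟪a y, v⟫| ^ p ∂μ := by
  rw [← integral_const_mul]
  refine integral_congr_ae (.of_forall fun y => ?_)
  simp only [inner_smul_right, abs_mul, abs_of_nonneg hl, mul_rpow hl (abs_nonneg _)]

theorem differentiableAt_integral_abs_inner_rpow_line (hp : 1 < p) (ha : AEStronglyMeasurable a μ)
    (hi : Integrable (fun y => ‖a y‖ ^ p) μ) (v e : E) :
    DifferentiableAt ℝ (fun t : ℝ => ∫ y, |⟪a y, v + t • e⟫| ^ p ∂μ) 0 := by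
  have hI := integrable_abs_inner_rpow (by linarith) ha hi
  have hu : ∀ w : E, AEMeasurable (fun y => ⟪a y, w⟫) μ := fun w =>
    (ha.inner aestronglyMeasurable_const).aemeasurable
  have habs : ∀ u : ℝ, |p * |u| ^ (p - 2) * u| = p * |u| ^ (p - 1) := by
    intro u
    rcases eq_or_ne u 0 with rfl | h
    · simp [zero_rpow (by linarith : p - 1 ≠ 0)]
    · rw [abs_mul, abs_mul, abs_of_pos (by linarith : 0 < p),
        abs_of_nonneg (by positivity : 0 ≤ |u| ^ (p - 2)),
        mul_assoc, ← rpow_add_one (abs_pos.2 h).ne']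
      ring_nf
  refine (hasDerivAt_integral_of_dominated_loc_of_deriv_le (Metric.ball_mem_nhds (0 : ℝ) one_pos)
    (F := fun (t : ℝ) y => |⟪a y, v + t • e⟫| ^ p)
    (F' := fun t y => p * |⟪a y, v + t • e⟫| ^ (p - 2) * ⟪a y, v + t • e⟫ * ⟪a y, e⟫)
    (bound := fun y => ‖a y‖ ^ p * (p * (‖v‖ + ‖e‖) ^ (p - 1) * ‖e‖))
    (.of_forall fun t => (hI _).aestronglyMeasurable) (hI _) ?_ ?_ (hi.mul_const _)
    ?_).2.differentiableAt
  · have h1 := hu (v + (0 : ℝ) • e)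
    have h2 := hu e
    exact AEMeasurable.aestronglyMeasurable (by fun_prop)
  · refine .of_forall fun y t ht => ?_
    have ht : |t| < 1 := by simpa using ht
    rw [norm_mul, norm_eq_abs, habs, norm_eq_abs]
    have h1 : ‖v + t • e‖ ≤ ‖v‖ + ‖e‖ := by
      refine (norm_add_le _ _).trans ?_
      gcongr
      rw [norm_smul, norm_eq_abs]
      exact mul_le_of_le_one_left (norm_nonneg _) ht.le
    have h2 : |⟪a y, v + t • e⟫| ^ (p - 1) ≤ ‖a y‖ ^ (p - 1) * (‖v‖ + ‖e‖) ^ (p - 1) := by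
      refine (abs_inner_rpow_le (by linarith) _ _).trans ?_
      gcongr
    have h3 : ‖a y‖ ^ p = ‖a y‖ ^ (p - 1) * ‖a y‖ := by
      rcases eq_or_ne (‖a y‖) 0 with h | h
      · simp [h, zero_rpow (by linarith : p ≠ 0)]
      · rw [← rpow_add_one h, sub_add_cancel]
    calc p * |⟪a y, v + t • e⟫| ^ (p - 1) * |⟪a y, e⟫|
        ≤ p * (‖a y‖ ^ (p - 1) * (‖v‖ + ‖e‖) ^ (p - 1)) * (‖a y‖ * ‖e‖) := by
          gcongr
          exact abs_real_inner_le_norm _ _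
      _ = _ := by rw [h3]; ring
  · refine .of_forall fun y t _ => ?_
    have h1 : HasDerivAt (fun t : ℝ => ⟪a y, v + t • e⟫) ⟪a y, e⟫ t := by
      have : (fun t : ℝ => ⟪a y, v + t • e⟫) = fun t => ⟪a y, v⟫ + t * ⟪a y, e⟫ := by
        funext t; rw [inner_add_right, inner_smul_right]
      rw [this]
      simpa using ((hasDerivAt_id t).mul_const ⟪a y, e⟫).const_add ⟪a y, v⟫
    exact (hasDerivAt_abs_rpow _ hp).comp t h1

end Moment


section Legendre

variable {n : ℕ}

local notation "𝔼" n => EuclideanSpace ℝ (Fin n)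

theorem inner_sub_le_legendre {C : (𝔼 n) → ℝ} {x : 𝔼 n}
    (hb : BddAbove (Set.range fun y => ⟪x, y⟫ - C y)) (y : 𝔼 n) :
    ⟪x, y⟫ - C y ≤ legendre C x :=
  le_ciSup hb y

theorem convexOn_legendre {C : (𝔼 n) → ℝ}
    (hb : ∀ x, BddAbove (Set.range fun y => ⟪x, y⟫ - C y)) :
    ConvexOn ℝ Set.univ (legendre C) := by
  refine ⟨convex_univ, fun x _ z _ s t hs ht hst => ciSup_le fun y => ?_⟩
  have h1 := mul_le_mul_of_nonneg_left (inner_sub_le_legendre (hb x) y) hs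
  have h2 := mul_le_mul_of_nonneg_left (inner_sub_le_legendre (hb z) y) ht
  have h3 : C y = s * C y + t * C y := by rw [← add_mul, hst, one_mul]
  simp only [inner_add_left, real_inner_smul_left, smul_eq_mul]
  linarith

theorem bddAbove_inner_sub_legendre {G : (𝔼 n) → ℝ}
    (hb : ∀ x, BddAbove (Set.range fun y => ⟪x, y⟫ - G y)) (x : 𝔼 n) :
    BddAbove (Set.range fun y => ⟪x, y⟫ - legendre G y) := by
  refine ⟨G x, ?_⟩
  rintro _ ⟨y, rfl⟩
  have := inner_sub_le_legendre (hb y) x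
  rw [real_inner_comm] at this
  dsimp only
  linarith

theorem legendre_legendre_le {G : (𝔼 n) → ℝ}
    (hb : ∀ x, BddAbove (Set.range fun y => ⟪x, y⟫ - G y)) (x : 𝔼 n) :
    legendre (legendre G) x ≤ G x := by
  refine ciSup_le fun y => ?_
  have := inner_sub_le_legendre (hb y) x
  rw [real_inner_comm] at this
  linarith

theorem legendre_neg {G : (𝔼 n) → ℝ} (heven : ∀ x, G (-x) = G x) (x : 𝔼 n) :
    legendre G (-x) = legendre G x := by
  unfold legendre
  rw [← (Equiv.neg (𝔼 n)).iSup_comp]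
  simp [heven]

theorem legendre_zero {C : (𝔼 n) → ℝ} (h0 : C 0 = 0) (hnn : ∀ x, 0 ≤ C x) :
    legendre C 0 = 0 := by
  refine le_antisymm (ciSup_le fun y => by simpa using hnn y) ?_
  have hb : BddAbove (Set.range fun y => ⟪(0 : 𝔼 n), y⟫ - C y) :=
    ⟨0, by rintro _ ⟨y, rfl⟩; simpa using hnn y⟩
  simpa [h0] using inner_sub_le_legendre hb 0

/-- The Legendre transform of a `p`-homogeneous function is homogeneous of the conjugate degree. -/
theorem legendre_smul_of_homogeneous {p q : ℝ} (hp : 1 < p) (hpq : p.HolderConjugate q)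
    {G : (𝔼 n) → ℝ} (hhom : ∀ l : ℝ, 0 ≤ l → ∀ x, G (l • x) = l ^ p * G x)
    (hnn : ∀ x, 0 ≤ G x) (l : ℝ) (hl : 0 ≤ l) (x : 𝔼 n) :
    legendre G (l • x) = l ^ q * legendre G x := by
  have hG0 : G 0 = 0 := by
    have := hhom 0 le_rfl 0
    rwa [zero_smul, zero_rpow (by linarith), zero_mul] at this
  rcases hl.eq_or_lt with rfl | hl
  · rw [zero_smul, legendre_zero hG0 hnn, zero_rpow hpq.symm.ne_zero, zero_mul]
  unfold legendre
  rw [Real.mul_iSup_of_nonneg (by positivity)]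
  have hc : l ^ (q - 1) ≠ 0 := (rpow_pos_of_pos hl _).ne'
  rw [← (Equiv.smulRight hc : (𝔼 n) ≃ 𝔼 n).iSup_comp]
  congr 1
  funext y
  have h1 : l ^ q = l * l ^ (q - 1) := by
    rw [mul_comm, ← rpow_add_one hl.ne', sub_add_cancel]
  have h2 : (l ^ (q - 1)) ^ p = l ^ q := by
    rw [← rpow_mul hl.le]
    congr 1
    have := hpq.symm.sub_one_mul_conj
    exact this
  simp only [Equiv.smulRight_apply, inner_smul_right, real_inner_smul_left]
  rw [hhom _ (by positivity), h2, h1]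
  ring

/-- A positive homogeneous function is bounded below by a multiple of a power of the norm. -/
theorem exists_mul_norm_rpow_le {p : ℝ} {G : (𝔼 n) → ℝ} (hp : 0 < p) (hc : Continuous G)
    (hhom : ∀ l : ℝ, 0 ≤ l → ∀ x, G (l • x) = l ^ p * G x) (hpos : ∀ x, x ≠ 0 → 0 < G x) :
    ∃ m : ℝ, 0 < m ∧ ∀ x, m * ‖x‖ ^ p ≤ G x := by
  have h0 : ∀ x, 0 ≤ G x := nonneg_of_homogeneous_of_pos hp hhom hpos
  rcases (Metric.sphere (0 : 𝔼 n) 1).eq_empty_or_nonempty with he | hne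
  · refine ⟨1, one_pos, fun x => ?_⟩
    rcases eq_or_ne x 0 with rfl | hx
    · simpa [zero_rpow hp.ne'] using h0 0
    · have : ‖x‖⁻¹ • x ∈ Metric.sphere (0 : 𝔼 n) 1 := by
        simp [norm_smul, hx]
      simp [he] at this
  · obtain ⟨u, hu, hmin⟩ := (isCompact_sphere (0 : 𝔼 n) 1).exists_isMinOn hne hc.continuousOn
    refine ⟨G u, hpos u (ne_zero_of_mem_unit_sphere ⟨u, hu⟩), fun x => ?_⟩
    rcases eq_or_ne x 0 with rfl | hx
    · simpa [zero_rpow hp.ne'] using h0 0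
    · have hm : ‖x‖⁻¹ • x ∈ Metric.sphere (0 : 𝔼 n) 1 := by
        simp [norm_smul, hx]
      have h1 : G u ≤ G (‖x‖⁻¹ • x) := hmin hm
      have h2 := hhom ‖x‖ (norm_nonneg _) (‖x‖⁻¹ • x)
      rw [smul_inv_smul₀ (norm_ne_zero_iff.2 hx)] at h2
      rw [h2, mul_comm]
      gcongr

theorem isBounded_sublevel_of_homogeneous {p : ℝ} {G : (𝔼 n) → ℝ} (hp : 0 < p) (hc : Continuous G)
    (hhom : ∀ l : ℝ, 0 ≤ l → ∀ x, G (l • x) = l ^ p * G x) (hpos : ∀ x, x ≠ 0 → 0 < G x)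
    {t : ℝ} (ht : 0 ≤ t) : Bornology.IsBounded {x | G x ≤ t} := by
  obtain ⟨m, hm, hle⟩ := exists_mul_norm_rpow_le hp hc hhom hpos
  refine isBounded_iff_forall_norm_le.2 ⟨(t / m) ^ p⁻¹, fun x hx => ?_⟩
  rw [le_rpow_inv_iff_of_pos (norm_nonneg x) (by positivity) hp, le_div_iff₀' hm]
  exact (hle x).trans hx

theorem exists_isMax_inner_sub {p : ℝ} {G : (𝔼 n) → ℝ} (hp : 1 < p) (hc : Continuous G)
    (hhom : ∀ l : ℝ, 0 ≤ l → ∀ x, G (l • x) = l ^ p * G x) (hpos : ∀ x, x ≠ 0 → 0 < G x)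
    (y : 𝔼 n) : ∃ x, ∀ z, ⟪y, z⟫ - G z ≤ ⟪y, x⟫ - G x := by
  obtain ⟨m, hm, hle⟩ := exists_mul_norm_rpow_le (by linarith) hc hhom hpos
  have hG0 : G 0 = 0 := by
    have := hhom 0 le_rfl 0
    rwa [zero_smul, zero_rpow (by linarith), zero_mul] at this
  refine (by fun_prop : Continuous fun z => ⟪y, z⟫ - G z).exists_forall_ge' 0 ?_
  have hev : ∀ᶠ z in Filter.cocompact (𝔼 n), ‖y‖ / m ≤ ‖z‖ ^ (p - 1) :=
    ((tendsto_rpow_atTop (by linarith : 0 < p - 1)).comp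
      (tendsto_norm_cocompact_atTop (E := 𝔼 n))).eventually_ge_atTop _
  filter_upwards [hev] with z hz
  have h1 : ⟪y, z⟫ ≤ ‖y‖ * ‖z‖ := real_inner_le_norm y z
  have h3 : ‖z‖ ^ p = ‖z‖ ^ (p - 1) * ‖z‖ := by
    rcases eq_or_ne ‖z‖ 0 with h | h
    · simp [h, zero_rpow (by linarith : p ≠ 0)]
    · rw [← rpow_add_one h, sub_add_cancel]
  have h4 : ‖y‖ * ‖z‖ ≤ m * ‖z‖ ^ p := by
    rw [h3, ← mul_assoc]
    gcongr
    rwa [div_le_iff₀' hm] at hz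
  simp only [inner_zero_right, hG0, sub_zero]
  linarith [hle z]

theorem bddAbove_inner_sub {p : ℝ} {G : (𝔼 n) → ℝ} (hp : 1 < p) (hc : Continuous G)
    (hhom : ∀ l : ℝ, 0 ≤ l → ∀ x, G (l • x) = l ^ p * G x) (hpos : ∀ x, x ≠ 0 → 0 < G x)
    (y : 𝔼 n) : BddAbove (Set.range fun z => ⟪y, z⟫ - G z) := by
  obtain ⟨x, hx⟩ := exists_isMax_inner_sub hp hc hhom hpos y
  exact ⟨_, by rintro _ ⟨z, rfl⟩; exact hx z⟩

/-- A vector at which a linear perturbation of `G` is maximal determines the linear form, if `G`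
is differentiable along lines. -/
theorem eq_of_isMax_inner_sub {G : (𝔼 n) → ℝ}
    (hd : ∀ v e : 𝔼 n, DifferentiableAt ℝ (fun t : ℝ => G (v + t • e)) 0) {x y z : 𝔼 n}
    (hy : ∀ w, ⟪y, w⟫ - G w ≤ ⟪y, x⟫ - G x) (hz : ∀ w, ⟪z, w⟫ - G w ≤ ⟪z, x⟫ - G x) : y = z := by
  have key : ∀ y : 𝔼 n, (∀ w, ⟪y, w⟫ - G w ≤ ⟪y, x⟫ - G x) → ∀ e : 𝔼 n,
      ⟪y, e⟫ = deriv (fun t : ℝ => G (x + t • e)) 0 := by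
    intro y hy e
    have h1 : HasDerivAt (fun t : ℝ => (⟪y, x⟫ + t * ⟪y, e⟫) - G (x + t • e))
        (⟪y, e⟫ - deriv (fun t : ℝ => G (x + t • e)) 0) 0 := by
      refine HasDerivAt.sub ?_ (hd x e).hasDerivAt
      simpa using ((hasDerivAt_id (0 : ℝ)).mul_const ⟪y, e⟫).const_add ⟪y, x⟫
    have hmax : IsLocalMax (fun t : ℝ => (⟪y, x⟫ + t * ⟪y, e⟫) - G (x + t • e)) 0 := by
      refine .of_forall fun t => ?_
      simpa [inner_add_right, inner_smul_right] using hy (x + t • e)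
    linarith [hmax.hasDerivAt_eq_zero h1]
  refine ext_inner_right ℝ fun e => ?_
  rw [key y hy e, key z hz e]

theorem strictConvexOn_legendre {p : ℝ} {G : (𝔼 n) → ℝ} (hp : 1 < p) (hc : Continuous G)
    (hhom : ∀ l : ℝ, 0 ≤ l → ∀ x, G (l • x) = l ^ p * G x) (hpos : ∀ x, x ≠ 0 → 0 < G x)
    (hd : ∀ v e : 𝔼 n, DifferentiableAt ℝ (fun t : ℝ => G (v + t • e)) 0) :
    StrictConvexOn ℝ Set.univ (legendre G) := by
  have hb := bddAbove_inner_sub hp hc hhom hpos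
  refine ⟨convex_univ, fun y _ z _ hyz s t hs ht hst => ?_⟩
  obtain ⟨x, hx⟩ := exists_isMax_inner_sub hp hc hhom hpos (s • y + t • z)
  have hle : legendre G (s • y + t • z) ≤ ⟪s • y + t • z, x⟫ - G x := ciSup_le hx
  have h3 : G x = s * G x + t * G x := by rw [← add_mul, hst, one_mul]
  have hy := inner_sub_le_legendre (hb y) x
  have hz := inner_sub_le_legendre (hb z) x
  simp only [inner_add_left, real_inner_smul_left] at hle
  simp only [smul_eq_mul]
  rcases hy.lt_or_eq with hy' | hy'
  · nlinarith [mul_lt_mul_of_pos_left hy' hs, mul_le_mul_of_nonneg_left hz ht.le]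
  rcases hz.lt_or_eq with hz' | hz'
  · nlinarith [mul_lt_mul_of_pos_left hz' ht, mul_le_mul_of_nonneg_left hy hs.le]
  exact absurd (eq_of_isMax_inner_sub hd
    (fun w => (inner_sub_le_legendre (hb y) w).trans hy'.ge)
    (fun w => (inner_sub_le_legendre (hb z) w).trans hz'.ge)) hyz

theorem legendre_pos_of_homogeneous {q : ℝ} {C : (𝔼 n) → ℝ} (hq : 1 < q)
    (hhom : ∀ l : ℝ, 0 ≤ l → ∀ x, C (l • x) = l ^ q * C x) {x : 𝔼 n} (hx : x ≠ 0)
    (hCx : 0 < C x) (hb : BddAbove (Set.range fun y => ⟪x, y⟫ - C y)) :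
    0 < legendre C x := by
  have hx2 : 0 < ⟪x, x⟫ := real_inner_self_pos.2 hx
  set t : ℝ := (⟪x, x⟫ / (2 * C x)) ^ (1 / (q - 1)) with ht
  have htpos : 0 < t := by positivity
  have ht1 : t ^ (q - 1) = ⟪x, x⟫ / (2 * C x) := by
    rw [ht, ← rpow_mul (by positivity), one_div_mul_cancel (by linarith), rpow_one]
  refine lt_of_lt_of_le ?_ (inner_sub_le_legendre hb (t • x))
  rw [hhom t htpos.le, inner_smul_right]
  have h2 : t ^ q = t ^ (q - 1) * t := by rw [← rpow_add_one htpos.ne', sub_add_cancel]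
  rw [h2, ht1]
  have : t * ⟪x, x⟫ - ⟪x, x⟫ / (2 * C x) * t * C x = t * ⟪x, x⟫ / 2 := by field_simp; ring
  rw [this]
  positivity

end Legendre


section Gradient

variable {E : Type*} [NormedAddCommGroup E] [InnerProductSpace ℝ E] [CompleteSpace E] {f : E → ℝ}

theorem continuous_gradient (hf : ContDiff ℝ (⊤ : ℕ∞) f) : Continuous (gradient f) :=
  (InnerProductSpace.toDual ℝ E).symm.continuous.comp (hf.continuous_fderiv (by simp))

theorem hasCompactSupport_gradient (hf : HasCompactSupport f) : HasCompactSupport (gradient f) :=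
  (hf.fderiv (𝕜 := ℝ)).comp_left (map_zero (InnerProductSpace.toDual ℝ E).symm)

/-- A differentiable compactly supported function with vanishing derivative in some direction
vanishes identically. -/
theorem eq_zero_of_inner_gradient_eq_zero (hf : Differentiable ℝ f) (hs : HasCompactSupport f)
    {ξ : E} (hξ : ξ ≠ 0) (h : ∀ y, ⟪gradient f y, ξ⟫ = 0) (x : E) : f x = 0 := by
  have hline : ∀ t : ℝ, HasDerivAt (fun t : ℝ => f (x + t • ξ)) 0 t := by
    intro t
    have h1 : HasDerivAt (fun t : ℝ => x + t • ξ) ξ t := by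
      simpa using ((hasDerivAt_id t).smul_const ξ).const_add x
    have h2 := (hf (x + t • ξ)).hasFDerivAt.comp_hasDerivAt t h1
    rw [← inner_gradient_left, h] at h2
    exact h2
  have hconst : ∀ t : ℝ, f (x + t • ξ) = f x := fun t => by
    have := is_const_of_deriv_eq_zero (fun t => (hline t).differentiableAt)
      (fun t => (hline t).deriv) t 0
    simpa using this
  obtain ⟨R, hR⟩ := hs.isCompact.isBounded.exists_norm_le
  by_contra hx
  set t : ℝ := (R + ‖x‖ + 1) / ‖ξ‖
  have hξ' : 0 < ‖ξ‖ := norm_pos_iff.2 hξ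
  have hmem : x + t • ξ ∈ tsupport f := subset_tsupport f (by simpa [hconst t] using hx)
  have h1 := hR _ hmem
  have h0 : 0 ≤ R := (norm_nonneg _).trans h1
  have h2 : ‖t • ξ‖ = R + ‖x‖ + 1 := by
    rw [norm_smul, norm_eq_abs, abs_of_nonneg (by positivity), div_mul_cancel₀ _ hξ'.ne']
  have h3 : ‖t • ξ‖ ≤ ‖x + t • ξ‖ + ‖x‖ := by
    simpa using norm_sub_le (x + t • ξ) x
  linarith

end Gradient

section Constants

theorem omegaR_pos {s : ℝ} (hs : -2 < s) : 0 < omegaR s :=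
  div_pos (rpow_pos_of_pos pi_pos _) (Gamma_pos_of_pos (by linarith))

theorem omegaR_two : omegaR 2 = π := by
  have : Gamma ((2 : ℝ) / 2 + 1) = 1 := by norm_num
  rw [omegaR, this]
  norm_num

theorem mul_omegaR {s : ℝ} (hs : 0 < s) : s * omegaR s = 2 * π * omegaR (s - 2) := by
  have h1 : Gamma (s / 2 + 1) = s / 2 * Gamma (s / 2) := Gamma_add_one (by positivity)
  have h2 : (s - 2) / 2 + 1 = s / 2 := by ring
  have h3 : π ^ (s / 2) = π ^ ((s - 2) / 2) * π := by
    rw [← rpow_add_one pi_ne_zero, h2]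
  have hG : 0 < Gamma (s / 2) := Gamma_pos_of_pos (by positivity)
  rw [omegaR, omegaR, h1, h2, h3]
  field_simp

theorem aOne_pos {n : ℕ} {p : ℝ} (hp : 1 < p) : 0 < aOne n p := by
  have hn : (0 : ℝ) ≤ n := n.cast_nonneg
  have h1 := omegaR_pos (s := n + p) (by linarith)
  have h2 := omegaR_pos (s := 2) (by norm_num)
  have h3 := omegaR_pos (s := n) (by linarith)
  have h4 := omegaR_pos (s := p - 1) (by linarith)
  unfold aOne
  positivity

theorem aOne_mul {n : ℕ} {p : ℝ} (hp : 1 < p) :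
    omegaR n * omegaR (p - 1) / (2 * omegaR (n + p - 2)) * (aOne n p * (n + p)) = 1 := by
  have hn : (0 : ℝ) ≤ n := n.cast_nonneg
  have h3 := omegaR_pos (s := n) (by linarith)
  have h4 := omegaR_pos (s := p - 1) (by linarith)
  have h5 := omegaR_pos (s := n + p - 2) (by linarith)
  have h6 := mul_omegaR (s := n + p) (by linarith)
  rw [aOne, omegaR_two]
  field_simp
  linear_combination h6

/-- One-dimensional Young inequality, in the form of a bound on a Legendre transform. -/
theorem sub_mul_rpow_le {p q : ℝ} (hpq : p.HolderConjugate q) {A h : ℝ} (hA : 0 < A)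
    (hh : 0 ≤ h) : h - A * h ^ p ≤ (p * A) ^ (-(q - 1)) / q := by
  have hp : 0 < p := hpq.pos
  have hpA : 0 < p * A := by positivity
  have hy := young_inequality_of_nonneg (a := h * (p * A) ^ (1 / p)) (b := (p * A) ^ (-(1 / p)))
    (by positivity) (by positivity) hpq
  have h1 : h * (p * A) ^ (1 / p) * (p * A) ^ (-(1 / p)) = h := by
    rw [mul_assoc, ← rpow_add hpA, add_neg_cancel, rpow_zero, mul_one]
  have h2 : (h * (p * A) ^ (1 / p)) ^ p / p = A * h ^ p := by
    rw [mul_rpow hh (by positivity), ← rpow_mul hpA.le, one_div_mul_cancel hp.ne', rpow_one]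
    field_simp
  have h3 : ((p * A) ^ (-(1 / p))) ^ q = (p * A) ^ (-(q - 1)) := by
    rw [← rpow_mul hpA.le]
    congr 1
    rw [← hpq.symm.div_conj_eq_sub_one]
    ring
  rw [h1, h2, h3] at hy
  linarith

/-- The right-hand side of Gentil's inequality is antitone in the partition function of the cost
and monotone in the energy. -/
theorem mul_log_gentil_mono {n : ℕ} (hn : 1 ≤ n) {p : ℝ} (hp : 0 < p) {I I' J J' : ℝ}
    (hI : 0 < I) (hII' : I ≤ I') (hJ : 0 < J) (hJJ' : J ≤ J') :
    (n / p : ℝ) * log (p ^ (p + 1) / (n * exp (p - 1) * I' ^ (p / (n : ℝ))) * J) ≤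
      n / p * log (p ^ (p + 1) / (n * exp (p - 1) * I ^ (p / (n : ℝ))) * J') := by
  have hn' : (0 : ℝ) < n := by exact_mod_cast hn
  have hI' := hI.trans_le hII'
  refine mul_le_mul_of_nonneg_left (log_le_log (by positivity) ?_) (by positivity)
  gcongr

/-- The constant in Gentil's inequality for the cost attached to the centroid body of a set of
volume `V` is the sharp affine constant. -/
theorem gentilConst_eq {n : ℕ} (hn : 1 ≤ n) {p q : ℝ} (hpq : p.HolderConjugate q)
    {V : ℝ} (hV : 0 < V) :
    p ^ (p + 1) / (n * exp (p - 1) *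
      (Gamma (n / q + 1) *
        (((p * (aOne n p * V)) ^ (-(q - 1)) / q) ^ (-(n / q : ℝ)) * V)) ^ (p / (n : ℝ))) *
      (n / (n + p) * V) =
    logSobolevConst n p * (cnp n p * (n * V) ^ (-(1 / (n : ℝ)))) ^ p := by
  have hp1 : 1 < p := hpq.lt
  have hp : 0 < p := hpq.pos
  have hq : 0 < q := hpq.symm.pos
  have hn' : (0 : ℝ) < n := by exact_mod_cast hn
  have ha := aOne_pos (n := n) hp1
  have ho1 := omegaR_pos (s := n) (by linarith)
  have ho2 := omegaR_pos (s := p - 1) (by linarith)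
  have ho3 := omegaR_pos (s := n + p - 2) (by linarith)
  have hG : 0 < Gamma (n / q + 1) := Gamma_pos_of_pos (by positivity)
  have hG2 : 0 < Gamma (n / 2 + 1 : ℝ) := Gamma_pos_of_pos (by positivity)
  set A := aOne n p * V with hA
  have hApos : 0 < A := by positivity
  have hpA : 0 < p * A := by positivity
  have hpow : (Gamma (n / q + 1) * (((p * A) ^ (-(q - 1)) / q) ^ (-(n / q : ℝ)) * V)) ^ (p / (n : ℝ))
      = Gamma (n / q + 1) ^ (p / (n : ℝ)) * (q ^ (p - 1) * (p * A) * V ^ (p / (n : ℝ))) := by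
    rw [mul_rpow hG.le (by positivity), mul_rpow (by positivity) hV.le,
      ← rpow_mul (by positivity)]
    have he : -(n / q : ℝ) * (p / n) = -(p - 1) := by
      rw [← hpq.div_conj_eq_sub_one]; field_simp
    have he2 : -(q - 1) * -(p - 1) = 1 := by
      linear_combination hpq.mul_eq_add
    rw [he, div_rpow (by positivity) hq.le, ← rpow_mul hpA.le, he2, rpow_one, rpow_neg hq.le,
      div_inv_eq_mul]
    ring
  have hq' : q ^ (p - 1) = p ^ (p - 1) / (p - 1) ^ (p - 1) := by
    rw [hpq.conjugate_eq, div_rpow hp.le (by linarith)]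
  have hp' : p ^ (p + 1) = p ^ (p - 1) * p * p := by
    rw [← rpow_add_one hp.ne', ← rpow_add_one hp.ne']
    ring_nf
  have hnq : (n : ℝ) * (p - 1) / p = n / q := by
    rw [hpq.conjugate_eq]; field_simp
  have hE : (cnp n p * (n * V) ^ (-(1 / (n : ℝ)))) ^ p =
      omegaR n ^ (p / (n : ℝ)) * (V ^ (p / (n : ℝ)))⁻¹ *
        (n * (omegaR n * omegaR (p - 1) / (2 * omegaR (n + p - 2)))) := by
    rw [cnp, mul_rpow (by positivity) (by positivity), mul_rpow (by positivity) (by positivity),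
      ← rpow_mul (by positivity), ← rpow_mul (by positivity), ← rpow_mul (by positivity),
      one_div_mul_cancel hp.ne', rpow_one, one_div_mul_eq_div, neg_mul, one_div_mul_eq_div,
      rpow_neg (by positivity), mul_rpow hn'.le ho1.le, mul_rpow hn'.le hV.le]
    field_simp
  have hL : logSobolevConst n p = p / n * ((p - 1) ^ (p - 1) / exp (p - 1)) *
      (omegaR n ^ (p / (n : ℝ)))⁻¹ * (Gamma (n / q + 1) ^ (p / (n : ℝ)))⁻¹ := by
    rw [logSobolevConst, hnq, div_rpow (by linarith) (exp_pos _).le, ← exp_mul, one_mul, omegaR,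
      div_rpow hG2.le hG.le, div_rpow (by positivity) hG2.le, ← rpow_mul pi_pos.le,
      rpow_neg pi_pos.le]
    have : (n / 2 * (p / n) : ℝ) = p / 2 := by field_simp
    rw [this]
    field_simp
  have hp1' : 0 < (p - 1) ^ (p - 1) := rpow_pos_of_pos (by linarith) _
  have key := aOne_mul (n := n) hp1
  rw [hpow, hE, hL, hq', hp']
  set W := omegaR n * omegaR (p - 1) / (2 * omegaR (n + p - 2))
  have hW : W = 1 / (aOne n p * (n + p)) := by
    rw [eq_div_iff (by positivity)]; exact key
  rw [hW, hA]
  have := rpow_pos_of_pos hV (p / (n : ℝ))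
  have := rpow_pos_of_pos hG (p / (n : ℝ))
  have := rpow_pos_of_pos ho1 (p / (n : ℝ))
  have := rpow_pos_of_pos hp (p - 1)
  field_simp

end Constants


section Centroid

variable {n : ℕ} {p q : ℝ}

/-- The centroid body is contained in a sublevel set of the Legendre transform of the
`p`-th moment function. -/
theorem centroidBody_subset_sublevel_legendre (hpq : p.HolderConjugate q)
    {K : Set (EuclideanSpace ℝ (Fin n))} (hK : 0 < (volume K).toReal) :
    centroidBody n p K ⊆ {x | legendre (fun v => ∫ y in K, |⟪y, v⟫| ^ p) x ≤
      (p * (aOne n p * (volume K).toReal)) ^ (-(q - 1)) / q} := by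
  intro x hx
  have hA : 0 < aOne n p * (volume K).toReal := mul_pos (aOne_pos hpq.lt) hK
  rw [Set.mem_ofPred_eq, legendre]
  refine ciSup_le fun (v : EuclideanSpace ℝ (Fin n)) => ?_
  have hv := hx v
  have h0 : 0 ≤ ∫ y in K, |⟪v, y⟫| ^ p := integral_nonneg fun y => by positivity
  have hy := sub_mul_rpow_le hpq hA (h := ((aOne n p * (volume K).toReal)⁻¹ *
    ∫ y in K, |⟪v, y⟫| ^ p) ^ (1 / p)) (by positivity)
  rw [← rpow_mul (by positivity), one_div_mul_cancel hpq.ne_zero, rpow_one,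
    mul_inv_cancel_left₀ hA.ne'] at hy
  simp only [real_inner_comm v] at hy hv ⊢
  linarith

theorem setIntegral_abs_inner_rpow_pos {E : Type*} [NormedAddCommGroup E] [InnerProductSpace ℝ E]
    [MeasurableSpace E] [BorelSpace E] {μ : Measure E} [μ.IsOpenPosMeasure]
    {K : Set E} (hK : (0 : E) ∈ interior K)
    (hi : ∀ v : E, IntegrableOn (fun y => |⟪y, v⟫| ^ p) K μ) {v : E} (hv : v ≠ 0) :
    0 < ∫ y in K, |⟪y, v⟫| ^ p ∂μ := by
  rw [setIntegral_pos_iff_support_of_nonneg_ae (.of_forall fun y => by positivity) (hi v)]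
  set U : Set E := {y | ⟪y, v⟫ ≠ 0} ∩ interior K with hU
  have hUo : IsOpen U :=
    (isOpen_ne_fun (by fun_prop) continuous_const).inter isOpen_interior
  have hcont : Continuous fun t : ℝ => t • v := by fun_prop
  have hne : U.Nonempty := by
    have hev : ∀ᶠ t : ℝ in nhds 0, t • v ∈ interior K :=
      hcont.continuousAt.eventually_mem (by simpa using isOpen_interior.mem_nhds hK)
    obtain ⟨ε, hε, hball⟩ := Metric.eventually_nhds_iff.1 hev
    refine ⟨(ε / 2) • v, ?_, hball (by simp [abs_of_pos hε, hε])⟩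
    have : 0 < ⟪v, v⟫ := real_inner_self_pos.2 hv
    simp only [Set.mem_ofPred_eq, real_inner_smul_left]
    positivity
  refine (hUo.measure_pos μ hne).trans_le (measure_mono fun y hy => ⟨?_, interior_subset hy.2⟩)
  exact (rpow_pos_of_pos (abs_pos.2 hy.1) p).ne'

end Centroid

/-- Interchanging the two integrals in the moment functions of `a` and of a set. -/
theorem integral_setIntegral_abs_inner_rpow {α E : Type*} [MeasurableSpace α]
    [NormedAddCommGroup E] [InnerProductSpace ℝ E] [MeasurableSpace E] [BorelSpace E]
    [SecondCountableTopology E]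
    {μ : Measure α} {ν : Measure E} [SFinite μ] [SFinite ν] {a : α → E} {p : ℝ} (hp : 0 ≤ p)
    (ha : AEStronglyMeasurable a μ) (hi : Integrable (fun y => ‖a y‖ ^ p) μ)
    (hν : Integrable (fun y => ‖y‖ ^ p) ν) :
    ∫ x, ∫ y, |⟪y, a x⟫| ^ p ∂ν ∂μ = ∫ y, ∫ x, |⟪a x, y⟫| ^ p ∂μ ∂ν := by
  rw [integral_integral_swap]
  · simp only [real_inner_comm]
  · refine (hi.mul_prod hν).mono' ?_ (.of_forall fun z => ?_)
    · have h : AEStronglyMeasurable (fun z : α × E => ⟪z.2, a z.1⟫) (μ.prod ν) :=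
        aestronglyMeasurable_id.comp_snd.inner ha.comp_fst
      exact (continuous_abs.rpow_const fun _ => Or.inr hp).comp_aestronglyMeasurable h
    · rw [Function.uncurry, norm_of_nonneg (by positivity), mul_comm]
      exact abs_inner_rpow_le hp _ _

/-- The quantity `Z_p(f)` in terms of the volume of a sublevel set. -/
theorem Zp_eq_of_pos {n : ℕ} [NeZero n] {p : ℝ} (hp : 0 < p) {f : EuclideanSpace ℝ (Fin n) → ℝ}
    (hc : Continuous fun ξ => ∫ y, |⟪gradient f y, ξ⟫| ^ p)
    (hpos : ∀ ξ, ξ ≠ 0 → 0 < ∫ y, |⟪gradient f y, ξ⟫| ^ p) :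
    Zp n p f = (n * (volume {ξ | ∫ y, |⟪gradient f y, ξ⟫| ^ p ≤ 1}).toReal) ^
      (-(1 / (n : ℝ))) := by
  have hdim : Module.finrank ℝ (EuclideanSpace ℝ (Fin n)) = n := finrank_euclideanSpace_fin
  have hn : (0 : ℝ) < n := by exact_mod_cast Nat.pos_of_neZero n
  have : Nontrivial (EuclideanSpace ℝ (Fin n)) :=
    Module.nontrivial_of_finrank_pos (R := ℝ) (by rw [hdim]; exact Nat.pos_of_neZero n)
  rw [measure_sublevel_of_homogeneous volume hp hc integral_abs_inner_rpow_smul hpos, hdim,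
    ENNReal.toReal_ofReal, mul_div_cancel₀ _ hn.ne']
  · rfl
  · refine div_nonneg (integral_nonneg fun ξ => rpow_nonneg (rpow_nonneg ?_ _) _) hn.le
    exact integral_nonneg fun y => by positivity

/-- Sharp affine `L_p` log-Sobolev inequality: assuming Gentil's log-Sobolev inequality for
`q`-homogeneous even strictly convex costs and the `L_p` Busemann-Petty centroid inequality,
every smooth compactly supported `f` with `∫ |f|^p = 1` satisfies
`Ent(|f|^p) ≤ (n/p) log(𝓛_{n,p} 𝓔_p(f)^p)`. -/
theorem affine_Lp_log_Sobolev (n : ℕ) (hn : 1 ≤ n) (p q : ℝ) (hp : 1 < p)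
    (hpq : 1 / p + 1 / q = 1) (f : EuclideanSpace ℝ (Fin n) → ℝ) (hf : ContDiff ℝ (⊤ : ℕ∞) f)
    (hsupp : HasCompactSupport f) (hnorm : (∫ x, |f x| ^ p) = 1)
    (hGentil : ∀ C : EuclideanSpace ℝ (Fin n) → ℝ,
      (∀ l : ℝ, 0 ≤ l → ∀ x, C (l • x) = l ^ q * C x) → (∀ x, C (-x) = C x) →
      StrictConvexOn ℝ Set.univ C →
      ∀ g : EuclideanSpace ℝ (Fin n) → ℝ, ContDiff ℝ (⊤ : ℕ∞) g → HasCompactSupport g →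
        (∫ x, |g x| ^ p) = 1 →
        (∫ x, |g x| ^ p * Real.log (|g x| ^ p)) ≤
          ((n : ℝ) / p) * Real.log
            ((p ^ (p + 1) / ((n : ℝ) * Real.exp (p - 1) *
                (∫ x, Real.exp (-(C x))) ^ (p / (n : ℝ)))) *
              ∫ x, legendre C (gradient g x)))
    (hBP : ∀ K : Set (EuclideanSpace ℝ (Fin n)), IsCompact K → Convex ℝ K →
      (0 : EuclideanSpace ℝ (Fin n)) ∈ interior K →
      (volume K).toReal ≤ (volume (centroidBody n p K)).toReal) :
    (∫ x, |f x| ^ p * Real.log (|f x| ^ p)) ≤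
      ((n : ℝ) / p) * Real.log (logSobolevConst n p * affineEnergy n p f ^ p) := by
  have hn' : (0 : ℝ) < n := by exact_mod_cast hn
  have hp0 : 0 < p := by linarith
  have hH : p.HolderConjugate q := Real.holderConjugate_iff.2 ⟨hp, by simpa using hpq⟩
  have : NeZero n := ⟨by omega⟩
  have hdim : Module.finrank ℝ (EuclideanSpace ℝ (Fin n)) = n := finrank_euclideanSpace_fin
  have : Nontrivial (EuclideanSpace ℝ (Fin n)) :=
    Module.nontrivial_of_finrank_pos (R := ℝ) (by omega)
  -- the `p`-th moment function of the gradient and its unit sublevel set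
  have hgc := continuous_gradient hf
  have hgs := hasCompactSupport_gradient hsupp
  have hgi : Integrable (fun y => ‖gradient f y‖ ^ p) := by
    refine Continuous.integrable_of_hasCompactSupport
      (hgc.norm.rpow_const fun _ => Or.inr hp0.le) ?_
    exact hgs.comp_left (g := fun v => ‖v‖ ^ p) (by simp [zero_rpow hp0.ne'])
  set H : EuclideanSpace ℝ (Fin n) → ℝ := fun ξ => ∫ y, |⟪gradient f y, ξ⟫| ^ p with hHdef
  have hHconv : ConvexOn ℝ Set.univ H :=
    convexOn_integral_abs_inner_rpow hp.le hgc.aestronglyMeasurable hgi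
  have hHc : Continuous H := hHconv.locallyLipschitz.continuous
  have hHhom : ∀ l : ℝ, 0 ≤ l → ∀ x, H (l • x) = l ^ p * H x := integral_abs_inner_rpow_smul
  have hHpos : ∀ ξ, ξ ≠ 0 → 0 < H ξ := by
    intro ξ hξ
    have hex : ∃ y, ⟪gradient f y, ξ⟫ ≠ 0 := by
      by_contra! hcon
      have hz := eq_zero_of_inner_gradient_eq_zero (hf.differentiable (by simp)) hsupp hξ hcon
      simp [hz, zero_rpow hp0.ne'] at hnorm
    obtain ⟨y, hy⟩ := hex
    refine Continuous.integral_pos_of_hasCompactSupport_nonneg_nonzero (x := y)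
      (f := fun y => |⟪gradient f y, ξ⟫| ^ p) ?_ ?_ (fun y => by positivity)
      (rpow_pos_of_pos (abs_pos.2 hy) p).ne'
    · exact (hgc.inner continuous_const).abs.rpow_const fun _ => Or.inr hp0.le
    · exact hgs.comp_left (g := fun v => |⟪v, ξ⟫| ^ p) (by simp [zero_rpow hp0.ne'])
  have hH0 : H 0 = 0 := by simp [hHdef, zero_rpow hp0.ne']
  set K : Set (EuclideanSpace ℝ (Fin n)) := {x | H x ≤ 1} with hKdef
  have hKint : (0 : EuclideanSpace ℝ (Fin n)) ∈ interior K :=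
    mem_interior.2 ⟨{x | H x < 1}, fun x (hx : H x < 1) => hx.le,
      isOpen_lt hHc continuous_const, by simp [hH0]⟩
  have hKconv : Convex ℝ K := by simpa using hHconv.convex_le 1
  have hKcomp : IsCompact K :=
    Metric.isCompact_of_isClosed_isBounded (isClosed_le hHc continuous_const)
      (isBounded_sublevel_of_homogeneous hp0 hHc hHhom hHpos zero_le_one)
  set V : ℝ := (volume K).toReal with hVdef
  have hVpos : 0 < V :=
    ENNReal.toReal_pos (Measure.measure_pos_of_nonempty_interior volume ⟨0, hKint⟩).ne'
      hKcomp.measure_ne_top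
  -- the `p`-th moment function of the sublevel set and the associated cost
  have hKi : Integrable (fun y : EuclideanSpace ℝ (Fin n) => ‖y‖ ^ p) (volume.restrict K) :=
    (continuous_norm.rpow_const fun _ => Or.inr hp0.le).continuousOn.integrableOn_compact hKcomp
  have hKm : AEStronglyMeasurable (fun y : EuclideanSpace ℝ (Fin n) => y) (volume.restrict K) :=
    aestronglyMeasurable_id
  set G : EuclideanSpace ℝ (Fin n) → ℝ := fun v => ∫ y in K, |⟪y, v⟫| ^ p with hGdef
  have hGc : Continuous G :=
    (convexOn_integral_abs_inner_rpow hp.le hKm hKi).locallyLipschitz.continuous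
  have hGhom : ∀ l : ℝ, 0 ≤ l → ∀ x, G (l • x) = l ^ p * G x := integral_abs_inner_rpow_smul
  have hGpos : ∀ v, v ≠ 0 → 0 < G v := fun v hv =>
    setIntegral_abs_inner_rpow_pos hKint (integrable_abs_inner_rpow hp0.le hKm hKi) hv
  have hGnn : ∀ v, 0 ≤ G v := nonneg_of_homogeneous_of_pos hp0 hGhom hGpos
  have hGb := bddAbove_inner_sub hp hGc hGhom hGpos
  set C := legendre G with hCdef
  have hChom : ∀ l : ℝ, 0 ≤ l → ∀ x, C (l • x) = l ^ q * C x :=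
    legendre_smul_of_homogeneous hp hH hGhom hGnn
  have hCeven : ∀ x, C (-x) = C x := legendre_neg fun v => by simp [hGdef]
  have hCconv : StrictConvexOn ℝ Set.univ C :=
    strictConvexOn_legendre hp hGc hGhom hGpos
      (differentiableAt_integral_abs_inner_rpow_line hp hKm hKi)
  have hCc : Continuous C := hCconv.convexOn.locallyLipschitz.continuous
  have hC0 : C 0 = 0 := legendre_zero (by simp [hGdef, zero_rpow hp0.ne']) hGnn
  have hCpos : ∀ x, x ≠ 0 → 0 < C x := by
    intro x hx
    have hne : x ≠ -x := fun h => by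
      have h2 : (2 : ℝ) • x = 0 := by rw [two_smul]; exact add_eq_zero_iff_eq_neg.2 h
      exact hx ((smul_eq_zero.1 h2).resolve_left two_ne_zero)
    have h := hCconv.2 (Set.mem_univ x) (Set.mem_univ (-x)) hne (by norm_num : (0 : ℝ) < 1 / 2)
      (by norm_num : (0 : ℝ) < 1 / 2) (by norm_num)
    rw [smul_neg, add_neg_cancel, hC0, hCeven, ← add_smul] at h
    norm_num at h
    exact h
  have hCnn : ∀ x, 0 ≤ C x := nonneg_of_homogeneous_of_pos hH.symm.pos hChom hCpos
  have hent := hGentil C hChom hCeven hCconv f hf hsupp hnorm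
  -- bound on the energy term
  have hCb := bddAbove_inner_sub_legendre hGb
  have hLc : Continuous (legendre C) := (convexOn_legendre hCb).locallyLipschitz.continuous
  have hL0 : legendre C 0 = 0 := legendre_zero hC0 hCnn
  have hLpos : ∀ x, x ≠ 0 → 0 < legendre C x := fun x hx =>
    legendre_pos_of_homogeneous hH.symm.lt hChom hx (hCpos x hx) (hCb x)
  have hLnn : ∀ x, 0 ≤ legendre C x := fun x => by
    rcases eq_or_ne x 0 with rfl | hx
    exacts [hL0.ge, (hLpos x hx).le]
  have hLs : HasCompactSupport fun x => legendre C (gradient f x) :=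
    hgs.comp_left (g := legendre C) hL0
  have hJpos : 0 < ∫ x, legendre C (gradient f x) := by
    obtain ⟨ξ, hξ⟩ := exists_ne (0 : EuclideanSpace ℝ (Fin n))
    have hex : ∃ y, gradient f y ≠ 0 := by
      by_contra! hcon
      exact (hHpos ξ hξ).ne' (by simp [hHdef, hcon, zero_rpow hp0.ne'])
    obtain ⟨y, hy⟩ := hex
    exact Continuous.integral_pos_of_hasCompactSupport_nonneg_nonzero (x := y)
      (hLc.comp hgc) hLs (fun x => hLnn _) (hLpos _ hy).ne'
  have hJle : ∫ x, legendre C (gradient f x) ≤ n / (n + p) * V := by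
    calc ∫ x, legendre C (gradient f x) ≤ ∫ x, G (gradient f x) := by
          refine integral_mono ((hLc.comp hgc).integrable_of_hasCompactSupport hLs)
            ((hGc.comp hgc).integrable_of_hasCompactSupport
              (hgs.comp_left (g := G) (by simp [hGdef, zero_rpow hp0.ne'])))
            fun x => legendre_legendre_le hGb _
      _ = ∫ y in K, H y :=
          integral_setIntegral_abs_inner_rpow hp0.le hgc.aestronglyMeasurable hgi hKi
      _ = n / (n + p) * V := by
          rw [setIntegral_sublevel_of_homogeneous volume hp0 hHc hHhom hHpos, hdim]
  -- bound on the partition function of the cost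
  set κ : ℝ := (p * (aOne n p * V)) ^ (-(q - 1)) / q with hκ
  have hκpos : 0 < κ :=
    div_pos (rpow_pos_of_pos (mul_pos hp0 (mul_pos (aOne_pos hp) hVpos)) _) hH.symm.pos
  have hCcomp : volume {x | C x ≤ κ} ≠ ⊤ :=
    (isBounded_sublevel_of_homogeneous hH.symm.pos hCc hChom hCpos hκpos.le).measure_lt_top.ne
  have hVle : V ≤ (volume {x | C x ≤ κ}).toReal :=
    (hBP K hKcomp hKconv hKint).trans
      (ENNReal.toReal_mono hCcomp (measure_mono (centroidBody_subset_sublevel_legendre hH hVpos)))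
  have hG1 : 0 < Gamma (n / q + 1) :=
    Gamma_pos_of_pos (by have := hH.symm.pos; positivity)
  have hIle : Gamma (n / q + 1) * (κ ^ (-(n / q : ℝ)) * V) ≤ ∫ x, exp (-(C x)) := by
    rw [integral_exp_neg_of_homogeneous volume hH.symm.pos hCc hChom hCpos,
      measure_sublevel_eq_rpow_mul volume hH.symm.pos hChom hκpos, hdim]
    gcongr
  have hS : Zp n p f = (n * V) ^ (-(1 / (n : ℝ))) := Zp_eq_of_pos hp0 hHc hHpos
  have hIpos : 0 < Gamma (n / q + 1) * (κ ^ (-(n / q : ℝ)) * V) :=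
    mul_pos hG1 (mul_pos (rpow_pos_of_pos hκpos _) hVpos)
  rw [affineEnergy, hS, ← gentilConst_eq hn hH hVpos]
  exact hent.trans (mul_log_gentil_mono hn hp0 hIpos hIle hJpos hJle)
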